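/- arXiv:2412.11018 — 3 statements merged into one kernel-verified Lean document; each statement's English description precedes it below -/
import Mathlib

section
/- Let λ ≥ 1 be an integer and let G be a finite simple graph with λ_min(G) ≥ −λ. Set m = λ² − λ and n = λ⁴ − 2λ³ + 2λ² − 2λ + 2. Then G is K̃_{m+1,n}-free, i.e., G has no induced subgraph isomorphic to K̃_{m+1,n}. -/
/-!
Since all adjacency eigenvalues of `G` are at least `-λ`, the matrix `A + λI` is positive
semidefinite, and so is every principal submatrix of it. An induced copy of `K̃_{M,n}` with
`M = λ² - λ + 1` would therefore give a nonnegative quadratic form on vectors that take a value `a`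
on the `M` clique vertices adjacent to the extra vertex, `b` on the other `n` clique vertices and
`c` on the extra vertex. This form equals
`(M a + n b)² + (λ - 1)(M a² + n b²) + λ c² + 2 M a c`.
Put `S = n + λ - 1 = λ(λ - 1)M + 1`. For `a = -λS`, `b = λM`, `c = MS`, the minimizing direction
for fixed `a`, the form equals `λSM(λ(λ - 1)M - S) = -λSM < 0`, a contradiction.
-/

open SimpleGraph Matrix

open Classical in
/-- The real adjacency matrix of a simple graph. -/
noncomputable def adjMat {V : Type*} [Fintype V] (G : SimpleGraph V) : Matrix V V ℝ :=
  Matrix.of fun x y => if G.Adj x y then (1 : ℝ) else 0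

/-- `μ` is an eigenvalue of the (real) adjacency matrix of `G`. -/
def HasAdjEigenvalue {V : Type*} [Fintype V] (G : SimpleGraph V) (μ : ℝ) : Prop :=
  ∃ f : V → ℝ, f ≠ 0 ∧ adjMat G *ᵥ f = μ • f

/-- `K̃_{m,n}`: the graph on `m+n+1` vertices consisting of a complete graph on the
first `m+n` vertices together with one extra vertex (the last one) adjacent to
exactly the first `m` of them. -/
def tildeK (m n : ℕ) : SimpleGraph (Fin (m + n + 1)) :=
  SimpleGraph.fromRel
    (fun i j => (i.val < m + n ∧ j.val < m + n) ∨ (i.val = m + n ∧ j.val < m))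

lemma adjMat_isHermitian {V : Type*} [Fintype V] (G : SimpleGraph V) :
    (adjMat G).IsHermitian := by
  ext i j
  rw [Matrix.conjTranspose_apply, star_trivial]
  simp only [adjMat, Matrix.of_apply]
  rw [G.adj_comm]

open Classical in
/-- A lower bound `-t` on the adjacency eigenvalues makes `A + tI` positive semidefinite, by the
spectral theorem. -/
lemma posSemidef_adjMat_add {V : Type*} [Fintype V] (G : SimpleGraph V) (t : ℝ)
    (hmin : ∀ μ : ℝ, HasAdjEigenvalue G μ → -t ≤ μ) :
    (adjMat G + t • (1 : Matrix V V ℝ)).PosSemidef := by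
  have hH : (adjMat G + t • (1 : Matrix V V ℝ)).IsHermitian := by
    refine (adjMat_isHermitian G).add ?_
    ext i j
    simp [Matrix.one_apply, eq_comm]
  rw [hH.posSemidef_iff_eigenvalues_nonneg]
  intro i
  have h := hH.mulVec_eigenvectorBasis i
  have hne : (hH.eigenvectorBasis i : V → ℝ) ≠ 0 := by
    intro h0
    apply hH.eigenvectorBasis.toBasis.ne_zero i
    ext x
    simpa using congrFun h0 x
  have := hmin (hH.eigenvalues i - t) ⟨_, hne, by
    rw [Matrix.add_mulVec, Matrix.smul_mulVec, Matrix.one_mulVec] at h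
    rw [sub_smul, ← h, add_sub_cancel_right]⟩
  simp only [Pi.zero_apply]
  linarith

/-- The vertices of `K̃_{M,N}` sorted into the `M` neighbours of the extra vertex, the `N` remaining
clique vertices, and the extra vertex. -/
def tildeKPart (M N : ℕ) : Fin M ⊕ Fin N ⊕ Unit → Fin (M + N + 1)
  | .inl i => ⟨i, by omega⟩
  | .inr (.inl j) => ⟨M + j, by omega⟩
  | .inr (.inr _) => ⟨M + N, by omega⟩

open Classical in
/-- The quadratic form of `A + tI` is nonnegative on vectors that are constant on the three parts of
an induced `K̃_{M,N}` and vanish elsewhere. -/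
lemma tildeK_form_nonneg {V : Type*} [Fintype V] (G : SimpleGraph V) (t : ℝ)
    (hmin : ∀ μ : ℝ, HasAdjEigenvalue G μ → -t ≤ μ) (M N : ℕ)
    (φ : tildeK M N ↪g G) (a b c : ℝ) :
    0 ≤ (M * a + N * b) ^ 2 + (t - 1) * (M * a ^ 2 + N * b ^ 2) + t * c ^ 2 + 2 * M * a * c := by
  have hP := (posSemidef_adjMat_add G t hmin).submatrix (fun x => φ (tildeKPart M N x))
  have h := hP.dotProduct_mulVec_nonneg (Sum.elim (fun _ => a) (Sum.elim (fun _ => b) fun _ => c))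
  have ent : ∀ x y, (adjMat G + t • (1 : Matrix V V ℝ)) (φ x) (φ y)
      = (if (tildeK M N).Adj x y then 1 else 0) + if x = y then t else 0 := by
    intro x y
    simp [adjMat, Matrix.one_apply]
  have e11 : ∀ i j : Fin M,
      (adjMat G + t • (1 : Matrix V V ℝ)) (φ (tildeKPart M N (.inl i)))
        (φ (tildeKPart M N (.inl j))) = 1 + if i = j then t - 1 else 0 := by
    intro i j
    have hi := i.2
    have hj := j.2
    by_cases hij : i = j
    · rw [ent]
      simp [hij]
    · have hne : (i : ℕ) ≠ j := fun h => hij (Fin.ext h)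
      rw [ent, if_pos, if_neg, if_neg hij] <;> simp [tildeK, tildeKPart] <;> omega
  have e22 : ∀ i j : Fin N,
      (adjMat G + t • (1 : Matrix V V ℝ)) (φ (tildeKPart M N (.inr (.inl i))))
        (φ (tildeKPart M N (.inr (.inl j)))) = 1 + if i = j then t - 1 else 0 := by
    intro i j
    have hi := i.2
    have hj := j.2
    by_cases hij : i = j
    · rw [ent]
      simp [hij]
    · have hne : (i : ℕ) ≠ j := fun h => hij (Fin.ext h)
      rw [ent, if_pos, if_neg, if_neg hij] <;> simp [tildeK, tildeKPart] <;> omega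
  have e12 : ∀ (i : Fin M) (j : Fin N),
      (adjMat G + t • (1 : Matrix V V ℝ)) (φ (tildeKPart M N (.inl i)))
        (φ (tildeKPart M N (.inr (.inl j)))) = 1 := by
    intro i j
    have hi := i.2
    rw [ent, if_pos, if_neg] <;> simp [tildeK, tildeKPart] <;> omega
  have e13 : ∀ (i : Fin M) (u : Unit),
      (adjMat G + t • (1 : Matrix V V ℝ)) (φ (tildeKPart M N (.inl i)))
        (φ (tildeKPart M N (.inr (.inr u)))) = 1 := by
    intro i u
    have hi := i.2
    rw [ent, if_pos, if_neg] <;> simp [tildeK, tildeKPart] <;> omega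
  have e23 : ∀ (i : Fin N) (u : Unit),
      (adjMat G + t • (1 : Matrix V V ℝ)) (φ (tildeKPart M N (.inr (.inl i))))
        (φ (tildeKPart M N (.inr (.inr u)))) = 0 := by
    intro i u
    have hi := i.2
    rw [ent, if_neg, if_neg] <;> simp [tildeK, tildeKPart] <;> omega
  have e33 : ∀ u v : Unit,
      (adjMat G + t • (1 : Matrix V V ℝ)) (φ (tildeKPart M N (.inr (.inr u))))
        (φ (tildeKPart M N (.inr (.inr v)))) = t := by
    intro u v
    rw [ent]
    simp
  have sym : ∀ x y, (adjMat G + t • (1 : Matrix V V ℝ)) x y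
      = (adjMat G + t • (1 : Matrix V V ℝ)) y x := by
    intro x y
    simp [adjMat, Matrix.one_apply, G.adj_comm x y, eq_comm (a := x)]
  have e21 := fun j i => (sym _ _).trans (e12 i j)
  have e31 := fun u i => (sym _ _).trans (e13 i u)
  have e32 := fun u i => (sym _ _).trans (e23 i u)
  simp only [dotProduct, mulVec, Fintype.sum_sum_type, submatrix_apply, e11, e12, e13, e21, e22,
    e23, e31, e32, e33, Sum.elim_inl, Sum.elim_inr, Pi.star_apply, star_trivial, add_mul,
    Finset.sum_add_distrib, ite_mul, Finset.sum_ite_eq, Finset.sum_const, Finset.card_univ,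
    Fintype.card_fin, Finset.mem_univ, if_true, zero_mul, nsmul_eq_mul, Fintype.card_unit] at h
  push_cast at h
  refine h.trans_eq ?_
  ring

/-- If `λ ≥ 1` is an integer and `G` a finite graph with
`λ_min(G) ≥ -λ`, then with `m = λ² - λ` and `n = λ⁴ - 2λ³ + 2λ² - 2λ + 2`
the graph `G` has no induced subgraph isomorphic to `K̃_{m+1,n}`. -/
theorem tildeK_free_of_eigenvalue_bound {V : Type*} [Fintype V] (G : SimpleGraph V)
    (l : ℤ) (hl : 1 ≤ l)
    (hmin : ∀ μ : ℝ, HasAdjEigenvalue G μ → -(l : ℝ) ≤ μ)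
    (m n : ℕ)
    (hm : (m : ℤ) = l ^ 2 - l)
    (hn : (n : ℤ) = l ^ 4 - 2 * l ^ 3 + 2 * l ^ 2 - 2 * l + 2) :
    IsEmpty (tildeK (m + 1) n ↪g G) := by
  refine ⟨fun φ => ?_⟩
  have hl' : (1 : ℝ) ≤ l := by exact_mod_cast hl
  have hm' : (m : ℝ) = (l : ℝ) ^ 2 - l := by exact_mod_cast hm
  have hn' : (n : ℝ) = (l : ℝ) ^ 4 - 2 * l ^ 3 + 2 * l ^ 2 - 2 * l + 2 := by exact_mod_cast hn
  obtain ⟨t, ht⟩ : ∃ t : ℝ, t = l := ⟨_, rfl⟩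
  rw [← ht] at hl' hm' hn' hmin
  obtain ⟨M, hM⟩ : ∃ M : ℝ, M = t ^ 2 - t + 1 := ⟨_, rfl⟩
  obtain ⟨S, hS⟩ : ∃ S : ℝ, S = t * (t - 1) * M + 1 := ⟨_, rfl⟩
  have h := tildeK_form_nonneg G t hmin (m + 1) n φ (-t * S) (t * M) (M * S)
  have hMm : ((m + 1 : ℕ) : ℝ) = M := by push_cast; rw [hm', hM]
  have hNS : (n : ℝ) = S - t + 1 := by rw [hn', hS, hM]; ring
  rw [hMm, hNS] at h
  have hMpos : 0 < M := by rw [hM]; nlinarith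
  have hSpos : 0 < S := by
    have : 0 ≤ t * (t - 1) * M :=
      mul_nonneg (mul_nonneg (by linarith) (by linarith)) hMpos.le
    linarith
  have hpos : 0 < t * S * M := mul_pos (mul_pos (by linarith) hSpos) hMpos
  have key : (M * (-t * S) + (S - t + 1) * (t * M)) ^ 2
      + (t - 1) * (M * (-t * S) ^ 2 + (S - t + 1) * (t * M) ^ 2) + t * (M * S) ^ 2
      + 2 * M * (-t * S) * (M * S) = -(t * S * M) := by
    rw [hS, hM]; ring
  linarith
end

section
/- Assume hypotheses (H). Then every weak clique of G has at least w − (s−1)m + 1 vertices; that is, every weak clique is a strong clique. -/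
/-!
Call a maximal clique *large* if it has at least `m * s + 1` vertices; weak cliques are large since
`w ≥ (s - 1) * e + m * s`.
By `card_neighbor_inter_le`, a vertex outside a large clique has at most `m` neighbours in it, so
two distinct large cliques share at most `m` vertices. Since the vertex count forbids anti-cliques
with more than `s` vertices (`card_antiClique_le`), a maximum anti-clique `I` has at most `s`
vertices, and each of its vertices lies in a large clique (`exists_large_clique`). These `#I`
large cliques are pairwise distinct, and they cover the graph: starting from an uncovered vertex,
one could greedily add one vertex from each clique and obtain an anti-clique with `#I + 1`
vertices (`exists_antiClique_extension`).

A weak clique `C` is too big to be covered by `s` other large cliques, so it belongs to the cover.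
Choose `y ∈ C` in no other clique of the cover. Every neighbour of `y` lies in `C` or in one of
the at most `s - 1` other cliques, each containing at most `m` neighbours of `y`. Hence
`w ≤ (#C - 1) + (s - 1) * m`.
-/

open SimpleGraph

/-- `C` is a maximal clique of `G`: a clique not properly contained in any other clique. -/
def IsMaxClique {V : Type*} (G : SimpleGraph V) (C : Finset V) : Prop :=
  G.IsClique (C : Set V) ∧ ∀ C' : Finset V, G.IsClique (C' : Set V) → C ⊆ C' → C' = C

/-- An anti-clique: a set of pairwise non-adjacent vertices. -/
def IsAntiClique {V : Type*} (G : SimpleGraph V) (I : Finset V) : Prop :=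
  ∀ x ∈ I, ∀ y ∈ I, x ≠ y → ¬ G.Adj x y

/-- A weak clique of `G` (w.r.t. parameters `s, w, e`): a maximal clique with at
least `w - (s-1)e + 1` vertices. -/
def IsWeakClique {V : Type*} (G : SimpleGraph V) (s w e : ℕ) (C : Finset V) : Prop :=
  IsMaxClique G C ∧ w - (s - 1) * e + 1 ≤ C.card

/-! ### Preliminaries -/

/-- A set with more than `k * m` elements is not covered by `k` sets each meeting it in at most
`m` elements. -/
lemma exists_avoiding {V ι : Type*} [DecidableEq V] (D : Finset V) (T : Finset ι)
    (f : ι → Finset V) (k m : ℕ) (hf : ∀ t ∈ T, (f t ∩ D).card ≤ m) (hT : T.card ≤ k)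
    (hD : m * k + 1 ≤ D.card) : ∃ c ∈ D, ∀ t ∈ T, c ∉ f t := by
  by_contra! hcon
  have hsub : D ⊆ T.biUnion (fun t => f t ∩ D) := by
    intro c hc
    obtain ⟨t, ht, hct⟩ := hcon c hc
    exact Finset.mem_biUnion.2 ⟨t, ht, Finset.mem_inter.2 ⟨hct, hc⟩⟩
  have h1 := Finset.card_le_card hsub
  have h2 := Finset.card_biUnion_le_card_mul T (fun t => f t ∩ D) m hf
  have h3 : T.card * m ≤ m * k := by
    rw [mul_comm m k]; exact Nat.mul_le_mul_right m hT
  omega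

/-- A clique `A ∪ B` together with a vertex `x` adjacent to all of `A` and to none of `B` is an
induced `K̃_{a,n}`. -/
lemma tildeK_embedding {V : Type*} [DecidableEq V] (G : SimpleGraph V) (a n : ℕ) (x : V)
    (A B : Finset V)
    (hA : A.card = a) (hB : B.card = n)
    (hK : ∀ y ∈ A ∪ B, ∀ z ∈ A ∪ B, y ≠ z → G.Adj y z)
    (hxA : ∀ y ∈ A, G.Adj x y) (hxB : ∀ y ∈ B, ¬ G.Adj x y) (hxB' : x ∉ B) :
    Nonempty (tildeK a n ↪g G) := by
  -- enumerate the clique so that its first `a` vertices are the neighbours of `x`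
  obtain ⟨g, hgA, hgB, hinj⟩ : ∃ g : ℕ → V, (∀ i, i < a → g i ∈ A) ∧
      (∀ i, a ≤ i → i < a + n → g i ∈ B) ∧
      ∀ i, i < a + n → ∀ j, j < a + n → g i = g j → i = j := by
    let fA : Fin a ≃ A := (finCongr hA.symm).trans A.equivFin.symm
    let fB : Fin n ≃ B := (finCongr hB.symm).trans B.equivFin.symm
    refine ⟨fun i => if h : i < a then fA ⟨i, h⟩ else
      if h' : i - a < n then fB ⟨i - a, h'⟩ else x, ?_, ?_, ?_⟩
    · intro i hi
      simp [hi]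
    · intro i hi hi'
      have h' : i - a < n := by omega
      simp [not_lt.2 hi, h']
    · have hdisj : ∀ (p : A) (q : B), (p : V) ≠ q := fun p q h =>
        hxB q q.2 (h ▸ hxA p p.2)
      intro i hi j hj hij
      by_cases hia : i < a <;> by_cases hja : j < a
      · simpa [hia, hja, Subtype.coe_inj] using hij
      · have h' : j - a < n := by omega
        simp only [hia, hja, h', dif_pos, dif_neg, not_false_eq_true] at hij
        exact absurd hij (hdisj _ _)
      · have h' : i - a < n := by omega
        simp only [hia, hja, h', dif_pos, dif_neg, not_false_eq_true] at hij
        exact absurd hij.symm (hdisj _ _)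
      · have h' : i - a < n := by omega
        have h'' : j - a < n := by omega
        simp only [hia, hja, h', h'', dif_pos, dif_neg, not_false_eq_true] at hij
        have := fB.injective (Subtype.coe_injective hij)
        simp only [Fin.mk.injEq] at this
        omega
  have hxA' : x ∉ A := fun h => G.loopless.irrefl x (hxA x h)
  have hmem : ∀ i, i < a + n → g i ∈ A ∪ B := by
    intro i hi
    by_cases hia : i < a
    · exact Finset.mem_union_left _ (hgA i hia)
    · exact Finset.mem_union_right _ (hgB i (not_lt.1 hia) hi)
  have hgx : ∀ i, i < a + n → g i ≠ x := by
    intro i hi h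
    have := hmem i hi
    rw [h, Finset.mem_union] at this
    tauto
  have hadjx : ∀ i, i < a + n → (G.Adj x (g i) ↔ i < a) := by
    intro i hi
    by_cases hia : i < a
    · simp [hia, hxA _ (hgA i hia)]
    · simp [hia, hxB _ (hgB i (not_lt.1 hia) hi)]
  have hadj : ∀ i j, i < a + n → j < a + n → (G.Adj (g i) (g j) ↔ i ≠ j) := by
    intro i j hi hj
    refine ⟨fun h hij => G.loopless.irrefl _ (hij ▸ h), fun h => ?_⟩
    exact hK _ (hmem i hi) _ (hmem j hj) fun h' => h (hinj i hi j hj h')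
  refine ⟨⟨⟨fun i => if i.val < a + n then g i.val else x, ?_⟩, ?_⟩⟩
  · intro i j hij
    have hi := i.2
    have hj := j.2
    by_cases h : i.val < a + n <;> by_cases h' : j.val < a + n <;>
      simp only [h, h', if_true, if_false] at hij
    · exact Fin.ext (hinj _ h _ h' hij)
    · exact absurd hij (hgx _ h)
    · exact absurd hij.symm (hgx _ h')
    · exact Fin.ext (by omega)
  · intro i j
    have hi := i.2
    have hj := j.2
    change G.Adj (if i.val < a + n then g i.val else x) (if j.val < a + n then g j.val else x) ↔ _
    simp only [tildeK, SimpleGraph.fromRel_adj, ne_eq, Fin.ext_iff]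
    by_cases h : i.val < a + n <;> by_cases h' : j.val < a + n <;>
      simp only [h, h', if_true, if_false, and_true, and_false, true_or, false_or]
    · rw [hadj _ _ h h']
    · rw [G.adj_comm, hadjx _ h]; omega
    · rw [hadjx _ h']; omega
    · simp only [SimpleGraph.irrefl, false_iff]; omega

lemma IsAntiClique.insert {V : Type*} [DecidableEq V] {G : SimpleGraph V} {I : Finset V} {c : V}
    (hI : IsAntiClique G I)
    (hc : ∀ x ∈ I, ¬ G.Adj x c) : IsAntiClique G (insert c I) := by
  intro x hx y hy hxy
  rw [Finset.mem_insert] at hx hy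
  rcases hx with rfl | hx <;> rcases hy with rfl | hy
  · exact absurd rfl hxy
  · exact fun h => hc y hy h.symm
  · exact hc x hx
  · exact hI x hx y hy hxy

lemma exists_isMaxClique_superset {V : Type*} [Finite V] (G : SimpleGraph V) (K : Finset V)
    (hK : G.IsClique (K : Set V)) :
    ∃ C, K ⊆ C ∧ IsMaxClique G C := by
  obtain ⟨C, hKC, hC⟩ := (Set.toFinite {C : Finset V | G.IsClique (C : Set V)}).exists_le_maximal hK
  exact ⟨C, hKC, hC.1, fun D hD hCD => (hC.eq_of_le hD hCD).symm⟩

section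

variable {V : Type*} [Fintype V] [DecidableEq V] (G : SimpleGraph V) [DecidableRel G.Adj]

/-! ### Neighbours of an outside vertex in a large clique -/

/-- The key consequence of `K̃_{m+1,n}`-freeness: a vertex outside a large maximal clique has at
most `m` neighbours in it. All its neighbours in the clique are shared with some non-neighbour in
the clique, so there are at most `e` of them and at least `n` non-neighbours remain; `m + 1`
neighbours would thus give an induced `K̃_{m+1,n}`. -/
lemma card_neighbor_inter_le (s m n e : ℕ)
    (h2 : ∀ x y : V, x ≠ y → ¬ G.Adj x y →
      (G.neighborFinset x ∩ G.neighborFinset y).card ≤ e)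
    (h5 : e + n ≤ m * s + 1)
    (h7 : IsEmpty (tildeK (m + 1) n ↪g G))
    (C : Finset V) (hC : IsMaxClique G C) (hCs : m * s + 1 ≤ C.card) (x : V) (hx : x ∉ C) :
    (G.neighborFinset x ∩ C).card ≤ m := by
  by_contra! hlt
  obtain ⟨y, hy, hxy⟩ : ∃ y ∈ C, ¬ G.Adj x y := by
    by_contra! hall
    have hcl : G.IsClique ((insert x C : Finset V) : Set V) := by
      rw [Finset.coe_insert]
      exact hC.1.insert fun b hb _ => hall b hb
    have := hC.2 _ hcl (Finset.subset_insert x C)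
    exact hx (this ▸ Finset.mem_insert_self x C)
  have hle : (G.neighborFinset x ∩ C).card ≤ e := by
    refine (Finset.card_le_card ?_).trans (h2 x y (fun h => hx (h ▸ hy)) hxy)
    intro z hz
    simp only [Finset.mem_inter, mem_neighborFinset] at hz ⊢
    exact ⟨hz.1, hC.1 hy hz.2 (fun h => hxy (h ▸ hz.1))⟩
  have hrest : n ≤ (C \ G.neighborFinset x).card := by
    have := Finset.card_sdiff_add_card_inter C (G.neighborFinset x)
    rw [Finset.inter_comm] at this
    omega
  obtain ⟨A, hAs, hAc⟩ := Finset.exists_subset_card_eq hlt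
  obtain ⟨B, hBs, hBc⟩ := Finset.exists_subset_card_eq hrest
  have hsub : ∀ y ∈ A ∪ B, y ∈ C := by
    intro y hy
    rcases Finset.mem_union.1 hy with h | h
    · exact (Finset.mem_inter.1 (hAs h)).2
    · exact (Finset.mem_sdiff.1 (hBs h)).1
  obtain ⟨φ⟩ := tildeK_embedding G (m + 1) n x A B hAc hBc
    (fun y hy z hz hyz => hC.1 (hsub y hy) (hsub z hz) hyz)
    (fun y hy => (G.mem_neighborFinset x y).1 (Finset.mem_inter.1 (hAs hy)).1)
    (fun y hy h => (Finset.mem_sdiff.1 (hBs hy)).2 ((G.mem_neighborFinset x y).2 h))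
    (fun h => hx (Finset.mem_sdiff.1 (hBs h)).1)
  exact h7.elim φ

/-! ### Size of anti-cliques -/

/-- Inclusion–exclusion up to second order for the closed neighbourhoods of an anti-clique. -/
lemma two_mul_card_le (w e : ℕ) (h1 : G.IsRegularOfDegree w)
    (h2 : ∀ x y : V, x ≠ y → ¬ G.Adj x y →
      (G.neighborFinset x ∩ G.neighborFinset y).card ≤ e)
    (I : Finset V) (hI : IsAntiClique G I) :
    2 * (I.card * (w + 1)) + I.card * e ≤
      2 * (I.biUnion fun x => insert x (G.neighborFinset x)).card + I.card * I.card * e := by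
  induction I using Finset.induction_on with
  | empty => simp
  | insert a I ha ih =>
    have ih := ih fun x hx y hy =>
      hI x (Finset.mem_insert_of_mem hx) y (Finset.mem_insert_of_mem hy)
    rw [Finset.biUnion_insert, Finset.card_insert_of_notMem ha]
    set U := I.biUnion fun x => insert x (G.neighborFinset x)
    have hcard : (insert a (G.neighborFinset a)).card = w + 1 := by
      rw [Finset.card_insert_of_notMem (by simp), G.card_neighborFinset_eq_degree, h1 a]
    have hinter : (insert a (G.neighborFinset a) ∩ U).card ≤ I.card * e := by
      rw [Finset.inter_biUnion]
      refine Finset.card_biUnion_le_card_mul _ _ _ fun b hb => ?_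
      have hab : a ≠ b := fun h => ha (h ▸ hb)
      have hnab := hI a (Finset.mem_insert_self a I) b (Finset.mem_insert_of_mem hb) hab
      refine (Finset.card_le_card ?_).trans (h2 a b hab hnab)
      intro z hz
      simp only [Finset.mem_inter, Finset.mem_insert, mem_neighborFinset] at hz ⊢
      rcases hz with ⟨rfl | h, rfl | h'⟩
      · exact absurd rfl hab
      · exact absurd h'.symm hnab
      · exact absurd h hnab
      · exact ⟨h, h'⟩
    have hu := Finset.card_union_add_card_inter (insert a (G.neighborFinset a)) U
    rw [hcard] at hu
    nlinarith

/-- The bound on the number of vertices limits anti-cliques to `s` vertices. -/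
lemma card_antiClique_le (s v w e : ℕ) (hV : Fintype.card V = v)
    (h1 : G.IsRegularOfDegree w)
    (h2 : ∀ x y : V, x ≠ y → ¬ G.Adj x y →
      (G.neighborFinset x ∩ G.neighborFinset y).card ≤ e)
    (h4 : v < (s + 1) * (w + 1) - s * (s + 1) * e / 2)
    (I : Finset V) (hI : IsAntiClique G I) : I.card ≤ s := by
  by_contra! hlt
  obtain ⟨J, hJs, hJc⟩ := Finset.exists_subset_card_eq (show s + 1 ≤ I.card from hlt)
  have hJ := two_mul_card_le G w e h1 h2 J fun x hx y hy => hI x (hJs hx) y (hJs hy)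
  rw [hJc] at hJ
  have hU := Finset.card_le_univ (J.biUnion fun x => insert x (G.neighborFinset x))
  rw [hV] at hU
  have h9 : v + s * (s + 1) * e / 2 < (s + 1) * (w + 1) := by omega
  -- `s * (s + 1)` is even, so the division by two is exact
  have h10 : 2 * (s * (s + 1) * e / 2) = s * (s + 1) * e :=
    Nat.mul_div_cancel' ((Nat.even_mul_succ_self s).two_dvd.mul_right e)
  nlinarith

/-! ### Anti-cliques and families of large cliques -/

/-- Greedy choice of one vertex from each clique of `F`: each new vertex must avoid the
neighbours of those chosen so far and the cliques still to be treated, each of which excludes at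
most `m` vertices. -/
lemma exists_antiClique_extension (s m : ℕ) (F : Finset (Finset V))
    (hbig : ∀ C ∈ F, m * s + 1 ≤ C.card)
    (hint : ∀ C ∈ F, ∀ D ∈ F, C ≠ D → (C ∩ D).card ≤ m)
    (hnb : ∀ C ∈ F, ∀ x, x ∉ C → (G.neighborFinset x ∩ C).card ≤ m)
    (I : Finset V) (hI : IsAntiClique G I) (hcard : I.card + F.card ≤ s + 1)
    (hIF : ∀ x ∈ I, ∀ C ∈ F, x ∉ C) :
    ∃ J : Finset V, IsAntiClique G J ∧ J.card = I.card + F.card := by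
  induction F using Finset.induction_on generalizing I with
  | empty => exact ⟨I, hI, by simp⟩
  | insert C F hCF ih =>
    have hC : C ∈ insert C F := Finset.mem_insert_self C F
    have hsub : ∀ D ∈ F, D ∈ insert C F := fun D hD => Finset.mem_insert_of_mem hD
    rw [Finset.card_insert_of_notMem hCF] at hcard ⊢
    obtain ⟨c, hc, hav⟩ := exists_avoiding C (I.disjSum F)
      (Sum.elim (fun x => G.neighborFinset x) id) s m
      (by
        rintro (x | D) ht
        · exact hnb C hC x (hIF x (by simpa using ht) C hC)
        · have hD : D ∈ F := by simpa using ht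
          exact hint D (hsub D hD) C hC (fun h => hCF (h ▸ hD)))
      (by rw [Finset.card_disjSum]; omega) (hbig C hC)
    have hcI : c ∉ I := fun h => hIF c h C hC hc
    obtain ⟨J, hJ, hJc⟩ := ih (fun D hD => hbig D (hsub D hD))
      (fun D hD E hE => hint D (hsub D hD) E (hsub E hE))
      (fun D hD => hnb D (hsub D hD)) (insert c I)
      (hI.insert fun x hx h => hav (Sum.inl x) (by simpa using hx) (by simpa using h))
      (by rw [Finset.card_insert_of_notMem hcI]; omega)
      (by
        intro x hx D hD
        rcases Finset.mem_insert.1 hx with rfl | hx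
        · exact hav (Sum.inr D) (by simpa using hD)
        · exact hIF x hx D (hsub D hD))
    exact ⟨J, hJ, by rw [hJc, Finset.card_insert_of_notMem hcI]; omega⟩

/-- Each vertex `a` of a maximum anti-clique `I` lies in a large clique: the closed
neighbourhood of `a` minus the neighbours of the other vertices of `I` loses at most
`(s - 1) * e` vertices, and it is a clique since two non-adjacent vertices in it could replace
`a` in `I`. -/
lemma exists_large_clique (s w e : ℕ) (h1 : G.IsRegularOfDegree w)
    (h2 : ∀ x y : V, x ≠ y → ¬ G.Adj x y →
      (G.neighborFinset x ∩ G.neighborFinset y).card ≤ e)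
    (I : Finset V) (hI : IsAntiClique G I) (hIs : I.card ≤ s)
    (hmax : ∀ J : Finset V, IsAntiClique G J → J.card ≤ I.card) (a : V) (ha : a ∈ I) :
    ∃ C, IsMaxClique G C ∧ a ∈ C ∧ w + 1 ≤ C.card + (s - 1) * e := by
  set P := insert a (G.neighborFinset a) \ (I.erase a).biUnion fun b => G.neighborFinset b with hP
  have hPb : ∀ u ∈ P, ∀ b ∈ I.erase a, ¬ G.Adj b u := by
    intro u hu b hb h
    exact (Finset.mem_sdiff.1 hu).2 (Finset.mem_biUnion.2 ⟨b, hb, (G.mem_neighborFinset b u).2 h⟩)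
  have hPI : ∀ u ∈ P, u ∉ I.erase a := by
    intro u hu hu'
    have := (Finset.mem_sdiff.1 hu).1
    rw [Finset.mem_insert, mem_neighborFinset] at this
    rcases this with rfl | h
    · simp at hu'
    · exact hI a ha u (Finset.mem_of_mem_erase hu') h.ne h
  have haP : a ∈ P := by
    refine Finset.mem_sdiff.2 ⟨Finset.mem_insert_self _ _, fun h => ?_⟩
    obtain ⟨b, hb, hab⟩ := Finset.mem_biUnion.1 h
    rw [mem_neighborFinset] at hab
    exact hI b (Finset.mem_of_mem_erase hb) a ha hab.ne hab
  have hPc : G.IsClique (P : Set V) := by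
    intro u hu z hz huz
    by_contra hnot
    rw [Finset.mem_coe] at hu hz
    have hJ0 : IsAntiClique G (I.erase a) := fun x hx y hy =>
      hI x (Finset.mem_of_mem_erase hx) y (Finset.mem_of_mem_erase hy)
    have hJ1 := hJ0.insert (hPb u hu)
    have hJ2 : IsAntiClique G (insert z (insert u (I.erase a))) := hJ1.insert (by
      intro x hx
      rcases Finset.mem_insert.1 hx with rfl | hx
      · exact hnot
      · exact hPb z hz x hx)
    have := hmax _ hJ2
    rw [Finset.card_insert_of_notMem, Finset.card_insert_of_notMem (hPI u hu),
      Finset.card_erase_of_mem ha] at this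
    · omega
    · rw [Finset.mem_insert]
      rintro (h | h)
      · exact huz h.symm
      · exact hPI z hz h
  have hloss : ((insert a (G.neighborFinset a)) ∩
      (I.erase a).biUnion fun b => G.neighborFinset b).card ≤ (s - 1) * e := by
    rw [Finset.inter_biUnion]
    refine (Finset.card_biUnion_le_card_mul _ _ e fun b hb => ?_).trans ?_
    · have hab := Finset.ne_of_mem_erase hb
      have hn := hI a ha b (Finset.mem_of_mem_erase hb) hab.symm
      refine (Finset.card_le_card ?_).trans (h2 a b hab.symm hn)
      intro z hz
      simp only [Finset.mem_inter, Finset.mem_insert, mem_neighborFinset] at hz ⊢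
      rcases hz with ⟨rfl | h, h'⟩
      · exact absurd h'.symm hn
      · exact ⟨h, h'⟩
    · rw [Finset.card_erase_of_mem ha]
      exact Nat.mul_le_mul_right e (by omega)
  have hsize := Finset.card_sdiff_add_card_inter (insert a (G.neighborFinset a))
    ((I.erase a).biUnion fun b => G.neighborFinset b)
  rw [← hP, Finset.card_insert_of_notMem (by simp), G.card_neighborFinset_eq_degree, h1 a] at hsize
  obtain ⟨C, hPC, hC⟩ := exists_isMaxClique_superset G P hPc
  have := Finset.card_le_card hPC
  exact ⟨C, hC, hPC haP, by omega⟩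

end

/-! ### Weak cliques are strong -/

/-- Under hypotheses (H), every weak clique has at least
`w - (s-1)m + 1` vertices, i.e. every weak clique is strong. -/
theorem weakClique_is_strong
    {V : Type*} [Fintype V] [DecidableEq V] (G : SimpleGraph V) [DecidableRel G.Adj]
    (s m n v w e : ℕ)
    (hs : 1 ≤ s) (hm : 1 ≤ m) (hn : 1 ≤ n) (hv : 1 ≤ v) (hw : 1 ≤ w) (he : 1 ≤ e)
    (hV : Fintype.card V = v)
    (h1 : G.IsRegularOfDegree w)
    (h2 : ∀ x y : V, x ≠ y → ¬ G.Adj x y →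
      (G.neighborFinset x ∩ G.neighborFinset y).card ≤ e)
    (h3 : (s - 1) * e + m * s - 1 < w)
    (h4 : v < (s + 1) * (w + 1) - s * (s + 1) * e / 2)
    (h5 : e + n ≤ m * s + 1)
    (h6 : m < e)
    (h7 : IsEmpty (tildeK (m + 1) n ↪g G))
    : ∀ C : Finset V, IsWeakClique G s w e C → w - (s - 1) * m + 1 ≤ C.card := by
  intro C hC
  have hms : 1 ≤ m * s := Nat.mul_pos hm hs
  have hnb : ∀ D : Finset V, IsMaxClique G D → m * s + 1 ≤ D.card → ∀ x, x ∉ D →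
      (G.neighborFinset x ∩ D).card ≤ m :=
    card_neighbor_inter_le G s m n e h2 h5 h7
  -- a vertex of `D` outside `E` is adjacent to everything in `D ∩ E`
  have hint : ∀ D E : Finset V, IsMaxClique G D → IsMaxClique G E → m * s + 1 ≤ E.card →
      D ≠ E → (D ∩ E).card ≤ m := by
    intro D E hD hE hEc hDE
    obtain ⟨x, hxD, hxE⟩ := Finset.not_subset.1 fun h => hDE (hD.2 E hE.1 h).symm
    refine (Finset.card_le_card ?_).trans (hnb E hE hEc x hxE)
    intro z hz
    rw [Finset.mem_inter] at hz
    exact Finset.mem_inter.2 ⟨(G.mem_neighborFinset x z).2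
      (hD.1 hxD hz.1 fun h => hxE (h ▸ hz.2)), hz.2⟩
  have hCbig : m * s + 1 ≤ C.card := by have := hC.2; omega
  obtain ⟨I, (hI : IsAntiClique G I),
    (hmax : ∀ J, IsAntiClique G J → J.card ≤ I.card)⟩ := Set.exists_max_image
    {I : Finset V | IsAntiClique G I} Finset.card (Set.toFinite _)
    ⟨∅, fun x hx => absurd hx (Finset.notMem_empty x)⟩
  have hIs : I.card ≤ s := card_antiClique_le G s v w e hV h1 h2 h4 I hI
  choose! φ hφmax hφmem hφcard using exists_large_clique G s w e h1 h2 I hI hIs hmax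
  set F := I.image φ with hF
  have hFmax : ∀ D ∈ F, IsMaxClique G D := by
    intro D hD
    obtain ⟨a, ha, rfl⟩ := Finset.mem_image.1 hD
    exact hφmax a ha
  have hFbig : ∀ D ∈ F, m * s + 1 ≤ D.card := by
    intro D hD
    obtain ⟨a, ha, rfl⟩ := Finset.mem_image.1 hD
    have := hφcard a ha
    omega
  have hFcard : F.card = I.card := by
    refine Finset.card_image_of_injOn fun a ha b hb hab => ?_
    by_contra hne
    exact hI a ha b hb hne ((hφmax a ha).1 (hφmem a ha) (hab ▸ hφmem b hb) hne)
  -- an uncovered vertex would extend to an anti-clique larger than `I`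
  have hcover : ∀ z : V, ∃ D ∈ F, z ∈ D := by
    intro z
    by_contra! hz
    obtain ⟨J, hJ, hJc⟩ := exists_antiClique_extension G s m F hFbig
      (fun D hD E hE => hint D E (hFmax D hD) (hFmax E hE) (hFbig E hE))
      (fun D hD => hnb D (hFmax D hD) (hFbig D hD)) {z}
      (fun x hx y hy hxy => by simp_all)
      (by rw [Finset.card_singleton]; omega) (fun x hx => by
        rw [Finset.mem_singleton.1 hx]; exact hz)
    have := hmax J hJ
    rw [Finset.card_singleton] at hJc
    omega
  have hCF : C ∈ F := by
    by_contra hCF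
    obtain ⟨c, -, hc⟩ := exists_avoiding C F id s m
      (fun D hD => hint D C (hFmax D hD) hC.1 hCbig fun h => hCF (h ▸ hD)) (by omega) hCbig
    obtain ⟨D, hD, hcD⟩ := hcover c
    exact hc D hD hcD
  have hEcard : (F.erase C).card ≤ s - 1 := by
    rw [Finset.card_erase_of_mem hCF]; omega
  -- a vertex of `C` that lies in no other clique of the cover
  obtain ⟨y, hyC, hy⟩ := exists_avoiding C (F.erase C) id s m
    (fun D hD => hint D C (hFmax D (Finset.mem_of_mem_erase hD)) hC.1 hCbig
      (Finset.ne_of_mem_erase hD)) (by omega) hCbig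
  have hsub : G.neighborFinset y ⊆
      C.erase y ∪ (F.erase C).biUnion fun D => G.neighborFinset y ∩ D := by
    intro z hz
    have hyz := (G.mem_neighborFinset y z).1 hz
    obtain ⟨D, hD, hzD⟩ := hcover z
    by_cases hDC : D = C
    · exact Finset.mem_union_left _ (Finset.mem_erase.2 ⟨hyz.ne', hDC ▸ hzD⟩)
    · exact Finset.mem_union_right _ (Finset.mem_biUnion.2
        ⟨D, Finset.mem_erase.2 ⟨hDC, hD⟩, Finset.mem_inter.2 ⟨hz, hzD⟩⟩)
  have hb1 := (Finset.card_le_card hsub).trans (Finset.card_union_le _ _)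
  have hb2 : ((F.erase C).biUnion fun D => G.neighborFinset y ∩ D).card ≤ (s - 1) * m :=
    (Finset.card_biUnion_le_card_mul _ _ m fun D hD =>
      hnb D (hFmax D (Finset.mem_of_mem_erase hD)) (hFbig D (Finset.mem_of_mem_erase hD)) y
        (hy D hD)).trans (Nat.mul_le_mul_right m hEcard)
  rw [G.card_neighborFinset_eq_degree, h1 y, Finset.card_erase_of_mem hyC] at hb1
  omega
end

section
/- Assume hypotheses (H). Then any two distinct weak cliques of G are vertex-disjoint. -/
/-!
Let `t` be the independence number of `G` and `I` an anti-clique with `t` vertices. Inclusion-exclusion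
on closed neighbourhoods turns the bound on `v` into `t ≤ s` (`anticlique_card_le`).

A weak clique `C` has at least `ms + 1 ≥ e + n` vertices. A vertex `z ∉ C` misses some vertex of `C`,
so it has at most `e` neighbours in `C`, and hence at least `n` non-neighbours there; forbidding
`K̃_{m+1,n}` then leaves at most `m` neighbours (`card_nbrs_le`). So distinct weak cliques share at
most `m` vertices, and a system of representatives that is an anti-clique can be chosen greedily from
at most `s` weak cliques (`exists_anticlique`).

For `x ∈ I`, the vertex `x` together with its neighbours adjacent to no other vertex of `I` is a clique
`P x`, by maximality of `t`, and it has at least `w + 1 - (s - 1) e` vertices, so it lies in a weak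
clique. Every weak clique meets `I` (otherwise `I` could be enlarged inside it), say in `x`, and must
contain `P x` (otherwise replace `x` by a vertex of `P x` outside it). Thus the weak cliques correspond
bijectively to the vertices of `I`: there are exactly `t ≤ s` of them. They cover `V`, since an
uncovered vertex together with greedy representatives would be an anti-clique of size `t + 1`.

Counting neighbours along this cover, a vertex lying in `C` only gives `w + 1 ≤ |C| + (s - 1) m`. If
`C` and `C₂` share a vertex `y`, then `w + 1 ≥ |C ∪ C₂| ≥ |C| + |C₂| - m ≥ 2(w + 1) - (2s - 1) m`,
whereas `w ≥ (s - 1) e + ms ≥ (2s - 1) m`.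
-/

open SimpleGraph

section aux

variable {V : Type*} [Fintype V] [DecidableEq V] {G : SimpleGraph V} [DecidableRel G.Adj]

/-! ### Induced `K̃_{a,b}` -/

/-- A clique, and a vertex with enough neighbours and non-neighbours in it, contain an induced
`K̃_{a,b}`. -/
lemma exists_tildeK {V : Type*} {G : SimpleGraph V} [DecidableRel G.Adj] {a b : ℕ} {C : Finset V}
    (hC : G.IsClique (C : Set V)) {z : V} (hz : z ∉ C)
    (ha : a ≤ (C.filter fun c => G.Adj z c).card)
    (hb : b ≤ (C.filter fun c => ¬ G.Adj z c).card) : Nonempty (tildeK a b ↪g G) := by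
  obtain ⟨A, hA, hAc⟩ := Finset.exists_subset_card_eq ha
  obtain ⟨B, hB, hBc⟩ := Finset.exists_subset_card_eq hb
  let f := A.equivFin.symm
  let g := B.equivFin.symm
  have hf : ∀ i, (f i : V) ∈ C ∧ G.Adj z (f i) := fun i =>
    Finset.mem_filter.1 (hA (f i).2)
  have hg : ∀ i, (g i : V) ∈ C ∧ ¬ G.Adj z (g i) := fun i =>
    Finset.mem_filter.1 (hB (g i).2)
  let F : Fin (a + b + 1) → V := fun i =>
    if h : i.val < a then f ⟨i.val, by omega⟩
    else if h' : i.val < a + b then g ⟨i.val - a, by omega⟩ else z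
  have F1 : ∀ i : Fin (a + b + 1), i.val < a → F i ∈ C ∧ G.Adj z (F i) := by
    intro i hi
    simp only [F, hi, dif_pos]
    exact hf _
  have F2 : ∀ i : Fin (a + b + 1), ¬ i.val < a → i.val < a + b → F i ∈ C ∧ ¬ G.Adj z (F i) := by
    intro i hi hi'
    simp only [F, hi, hi', dif_pos, dif_neg, not_false_eq_true]
    exact hg _
  have F3 : ∀ i : Fin (a + b + 1), ¬ i.val < a + b → F i = z := by
    intro i hi
    have : ¬ i.val < a := by omega
    simp only [F, hi, this, dif_neg, not_false_eq_true]
  have FC : ∀ i : Fin (a + b + 1), i.val < a + b → F i ∈ C := by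
    intro i hi
    by_cases h : i.val < a
    · exact (F1 i h).1
    · exact (F2 i h hi).1
  have Finj : Function.Injective F := by
    intro i j hij
    by_cases hi : i.val < a + b <;> by_cases hj : j.val < a + b
    · by_cases hi' : i.val < a <;> by_cases hj' : j.val < a
      · simp only [F, hi', hj', dif_pos] at hij
        have := f.injective (Subtype.ext hij)
        simp only [Fin.mk.injEq] at this
        exact Fin.ext this
      · exact absurd (hij ▸ (F1 i hi').2) (F2 j hj' hj).2
      · exact absurd (hij ▸ (F1 j hj').2) (F2 i hi' hi).2
      · simp only [F, hi', hj', hi, hj, dif_pos, dif_neg, not_false_eq_true] at hij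
        have := g.injective (Subtype.ext hij)
        simp only [Fin.mk.injEq] at this
        exact Fin.ext (by omega)
    · have := FC i hi
      rw [hij, F3 j hj] at this
      exact absurd this hz
    · have := FC j hj
      rw [← hij, F3 i hi] at this
      exact absurd this hz
    · exact Fin.ext (by omega)
  refine ⟨⟨⟨F, Finj⟩, ?_⟩⟩
  intro i j
  simp only [Function.Embedding.coeFn_mk, tildeK, SimpleGraph.fromRel_adj]
  by_cases hij : i = j
  · subst hij
    simp
  have hne : F i ≠ F j := fun h => hij (Finj h)
  have hv : i.val ≠ j.val := fun h => hij (Fin.ext h)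
  by_cases hi : i.val < a + b <;> by_cases hj : j.val < a + b
  · have := hC (FC i hi) (FC j hj) hne
    simp [this, hij, hi, hj]
  · rw [F3 j hj, G.adj_comm]
    by_cases hi' : i.val < a
    · have := (F1 i hi').2
      simp only [this, true_iff]
      exact ⟨hij, Or.inr (Or.inr ⟨by omega, hi'⟩)⟩
    · have := (F2 i hi' hi).2
      simp only [this, false_iff]
      omega
  · rw [F3 i hi]
    by_cases hj' : j.val < a
    · have := (F1 j hj').2
      simp only [this, true_iff]
      exact ⟨hij, Or.inl (Or.inr ⟨by omega, hj'⟩)⟩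
    · have := (F2 j hj' hj).2
      simp only [this, false_iff]
      omega
  · omega

/-! ### The independence number -/

/-- Truncated inclusion-exclusion: closed neighbourhoods of non-adjacent vertices overlap in at
most `e` vertices. -/
lemma anticlique_count {w e : ℕ} (h1 : G.IsRegularOfDegree w)
    (h2 : ∀ x y : V, x ≠ y → ¬ G.Adj x y →
      (G.neighborFinset x ∩ G.neighborFinset y).card ≤ e) (J : Finset V) :
    IsAntiClique G J → J.card * (w + 1) ≤
      (J.biUnion fun x => insert x (G.neighborFinset x)).card + J.card.choose 2 * e := by
  induction J using Finset.induction_on with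
  | empty => simp
  | insert a J ha ih =>
    intro hJ
    have ih := ih fun x hx y hy => hJ x (Finset.mem_insert_of_mem hx) y (Finset.mem_insert_of_mem hy)
    set N : V → Finset V := fun x => insert x (G.neighborFinset x) with hN
    have hNa : (N a).card = w + 1 := by
      rw [hN, Finset.card_insert_of_notMem (by simp), G.card_neighborFinset_eq_degree, h1 a]
    have hover : (N a ∩ J.biUnion N).card ≤ J.card * e := by
      rw [Finset.inter_biUnion]
      refine Finset.card_biUnion_le_card_mul _ _ _ fun b hb => ?_
      have hab : a ≠ b := fun h => ha (h ▸ hb)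
      have hadj := hJ a (Finset.mem_insert_self _ _) b (Finset.mem_insert_of_mem hb) hab
      refine le_trans (Finset.card_le_card ?_) (h2 a b hab hadj)
      intro c hc
      simp only [hN, Finset.mem_inter, Finset.mem_insert, mem_neighborFinset] at hc ⊢
      obtain ⟨rfl | h, rfl | h'⟩ := hc
      · exact absurd rfl hab
      · exact absurd h'.symm hadj
      · exact absurd h hadj
      · exact ⟨h, h'⟩
    rw [Finset.biUnion_insert, Finset.card_insert_of_notMem ha, Nat.choose_succ_succ' J.card 1,
      Nat.choose_one_right]
    have := Finset.card_union_add_card_inter (N a) (J.biUnion N)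
    nlinarith

lemma anticlique_card_le {s v w e : ℕ} (hV : Fintype.card V = v) (h1 : G.IsRegularOfDegree w)
    (h2 : ∀ x y : V, x ≠ y → ¬ G.Adj x y →
      (G.neighborFinset x ∩ G.neighborFinset y).card ≤ e)
    (h4 : v < (s + 1) * (w + 1) - s * (s + 1) * e / 2) {J : Finset V} (hJ : IsAntiClique G J) :
    J.card ≤ s := by
  by_contra! hlt
  obtain ⟨J', hJ', hc⟩ := Finset.exists_subset_card_eq (Nat.succ_le_of_lt hlt)
  have hcount := anticlique_count h1 h2 J' fun x hx y hy => hJ x (hJ' hx) y (hJ' hy)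
  rw [hc] at hcount
  have hle := Finset.card_le_univ (J'.biUnion fun x => insert x (G.neighborFinset x))
  rw [hV] at hle
  have hch : s * (s + 1) * e / 2 = (s + 1).choose 2 * e := by
    rw [Nat.choose_two_right, Nat.add_sub_cancel, mul_comm s (s + 1),
      Nat.div_mul_right_comm (by rw [mul_comm]; exact (Nat.even_mul_succ_self s).two_dvd)]
  simp only [Nat.succ_eq_add_one] at hcount
  omega

/-! ### Maximal cliques -/

lemma exists_isMaxClique {V : Type*} [Fintype V] {G : SimpleGraph V} {P : Finset V}
    (hP : G.IsClique (P : Set V)) :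
    ∃ C, P ⊆ C ∧ IsMaxClique G C := by
  classical
  obtain ⟨C, hPC, hC⟩ := (Set.toFinite {C : Finset V | G.IsClique (C : Set V)}).exists_le_maximal
    (a := P) hP
  exact ⟨C, hPC, hC.1, fun C' h hle => le_antisymm (hC.2 h hle) hle⟩

/-- How `K̃`-freeness is used: an outside vertex sees at most `m` vertices of a
large maximal clique. -/
lemma card_nbrs_le {m n e : ℕ}
    (h2 : ∀ x y : V, x ≠ y → ¬ G.Adj x y →
      (G.neighborFinset x ∩ G.neighborFinset y).card ≤ e)
    (h7 : IsEmpty (tildeK (m + 1) n ↪g G)) {C : Finset V} (hC : IsMaxClique G C)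
    (hcard : e + n ≤ C.card) {z : V} (hz : z ∉ C) :
    (C.filter fun c => G.Adj z c).card ≤ m := by
  by_contra! hlt
  have hex : ∃ c ∈ C, ¬ G.Adj z c := by
    by_contra! hall
    have hcl : G.IsClique ((insert z C : Finset V) : Set V) := by
      rw [Finset.coe_insert]
      exact hC.1.insert fun b hb _ => hall b hb
    have := hC.2 _ hcl (Finset.subset_insert _ _)
    exact hz (this ▸ Finset.mem_insert_self z C)
  obtain ⟨c, hc, hzc⟩ := hex
  have hle : (C.filter fun c => G.Adj z c).card ≤ e := by
    refine le_trans (Finset.card_le_card ?_) (h2 z c (fun h => hz (h ▸ hc)) hzc)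
    intro d hd
    obtain ⟨hd, hzd⟩ := Finset.mem_filter.1 hd
    rw [Finset.mem_inter, mem_neighborFinset, mem_neighborFinset]
    exact ⟨hzd, hC.1 hc hd fun h => hzc (h ▸ hzd)⟩
  have hsum := Finset.card_filter_add_card_filter_not (s := C) (fun c => G.Adj z c)
  exact (exists_tildeK hC.1 hz hlt (b := n) (by omega)).elim h7.false

/-! ### Anti-cliques and degrees along a family of large cliques -/

/-- Greedy choice: an anti-clique disjoint from the members of a family `𝒦` of large cliques extends
by one representative from each member. -/
lemma exists_anticlique {V : Type*} [DecidableEq V] {G : SimpleGraph V} [DecidableRel G.Adj]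
    {s m : ℕ} (𝒦 : Finset (Finset V)) :
    (∀ C ∈ 𝒦, m * s + 1 ≤ C.card) →
    (∀ C ∈ 𝒦, ∀ z, z ∉ C → (C.filter fun c => G.Adj z c).card ≤ m) →
    (∀ C ∈ 𝒦, ∀ D ∈ 𝒦, C ≠ D → (C ∩ D).card ≤ m) →
    ∀ J : Finset V, IsAntiClique G J → (∀ C ∈ 𝒦, Disjoint J C) → J.card + 𝒦.card ≤ s + 1 →
    ∃ J' : Finset V, IsAntiClique G J' ∧ J'.card = J.card + 𝒦.card := by
  induction 𝒦 using Finset.induction_on with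
  | empty => exact fun _ _ _ J hJ _ _ => ⟨J, hJ, by simp⟩
  | insert C 𝒦 hC ih =>
    intro hbig hout hint J hJ hdisj hcard
    have hCm := Finset.mem_insert_self C 𝒦
    have hmem : ∀ D ∈ 𝒦, D ∈ insert C 𝒦 := fun D h => Finset.mem_insert_of_mem h
    rw [Finset.card_insert_of_notMem hC] at hcard ⊢
    -- The representative has to avoid the neighbours of `J` and the remaining cliques.
    have hp : ∃ p ∈ C, p ∉ (J.biUnion fun z => C.filter fun c => G.Adj z c) ∪
        𝒦.biUnion fun D => C ∩ D := by
      apply Finset.exists_mem_notMem_of_card_lt_card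
      have b1 : (J.biUnion fun z => C.filter fun c => G.Adj z c).card ≤ J.card * m :=
        Finset.card_biUnion_le_card_mul _ _ _ fun z hz =>
          hout C hCm z (Finset.disjoint_left.1 (hdisj C hCm) hz)
      have b2 : (𝒦.biUnion fun D => C ∩ D).card ≤ 𝒦.card * m :=
        Finset.card_biUnion_le_card_mul _ _ _ fun D hD =>
          hint C hCm D (hmem D hD) fun h => hC (h ▸ hD)
      have b3 := Finset.card_union_le (J.biUnion fun z => C.filter fun c => G.Adj z c)
        (𝒦.biUnion fun D => C ∩ D)
      have b4 := hbig C hCm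
      have b5 : (J.card + 𝒦.card) * m ≤ s * m := Nat.mul_le_mul_right _ (by omega)
      nlinarith
    obtain ⟨p, hpC, hp⟩ := hp
    simp only [Finset.mem_union, Finset.mem_biUnion, Finset.mem_filter, Finset.mem_inter, not_or,
      not_exists, not_and] at hp
    have hpJ : p ∉ J := fun h => Finset.disjoint_left.1 (hdisj C hCm) h hpC
    obtain ⟨J', hJ', hc⟩ := ih (fun D h => hbig D (hmem D h)) (fun D h => hout D (hmem D h))
      (fun D h E h' => hint D (hmem D h) E (hmem E h')) (insert p J) (by
        intro x hx y hy hxy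
        rcases Finset.mem_insert.1 hx with rfl | hx' <;> rcases Finset.mem_insert.1 hy with rfl | hy'
        · exact absurd rfl hxy
        · exact fun h => hp.1 y hy' hpC h.symm
        · exact hp.1 x hx' hpC
        · exact hJ x hx' y hy' hxy)
      (fun D hD => Finset.disjoint_insert_left.2 ⟨hp.2 D hD hpC, hdisj D (hmem D hD)⟩)
      (by rw [Finset.card_insert_of_notMem hpJ]; omega)
    refine ⟨J', hJ', ?_⟩
    rw [hc, Finset.card_insert_of_notMem hpJ]
    omega

/-- If at most `s` cliques, meeting pairwise in at most `m` vertices, cover the graph, then each of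
them has almost `w + 1` vertices: look at a vertex lying in no other member. -/
lemma degree_bound {s m w : ℕ} (h1 : G.IsRegularOfDegree w) {𝒦 : Finset (Finset V)}
    (hbig : ∀ C ∈ 𝒦, m * s + 1 ≤ C.card)
    (hout : ∀ C ∈ 𝒦, ∀ z, z ∉ C → (C.filter fun c => G.Adj z c).card ≤ m)
    (hint : ∀ C ∈ 𝒦, ∀ D ∈ 𝒦, C ≠ D → (C ∩ D).card ≤ m)
    (hcov : ∀ z, ∃ C ∈ 𝒦, z ∈ C) (hcard : 𝒦.card ≤ s) {C : Finset V} (hC : C ∈ 𝒦) :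
    w + 1 ≤ C.card + (s - 1) * m := by
  have hce : (𝒦.erase C).card * m ≤ (s - 1) * m :=
    Nat.mul_le_mul_right _ (by rw [Finset.card_erase_of_mem hC]; omega)
  have hp : ∃ p ∈ C, p ∉ (𝒦.erase C).biUnion fun D => C ∩ D := by
    apply Finset.exists_mem_notMem_of_card_lt_card
    have b2 : ((𝒦.erase C).biUnion fun D => C ∩ D).card ≤ (𝒦.erase C).card * m :=
      Finset.card_biUnion_le_card_mul _ _ _ fun D hD =>
        hint C hC D (Finset.mem_of_mem_erase hD) (Finset.ne_of_mem_erase hD).symm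
    have b4 := hbig C hC
    have b5 : (s - 1) * m ≤ s * m := Nat.mul_le_mul_right _ (by omega)
    nlinarith
  obtain ⟨p, hpC, hp⟩ := hp
  simp only [Finset.mem_biUnion, Finset.mem_inter, not_exists, not_and] at hp
  have hsub : insert p (G.neighborFinset p) ⊆
      C ∪ (𝒦.erase C).biUnion fun D => D.filter fun c => G.Adj p c := by
    intro q hq
    rcases Finset.mem_insert.1 hq with rfl | hq
    · exact Finset.mem_union_left _ hpC
    · rw [mem_neighborFinset] at hq
      obtain ⟨D, hD, hqD⟩ := hcov q
      by_cases hDC : D = C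
      · exact Finset.mem_union_left _ (hDC ▸ hqD)
      · exact Finset.mem_union_right _ (Finset.mem_biUnion.2
          ⟨D, Finset.mem_erase.2 ⟨hDC, hD⟩, Finset.mem_filter.2 ⟨hqD, hq⟩⟩)
  have hle := Finset.card_le_card hsub
  rw [Finset.card_insert_of_notMem (by simp), G.card_neighborFinset_eq_degree, h1 p] at hle
  have b1 : ((𝒦.erase C).biUnion fun D => D.filter fun c => G.Adj p c).card
      ≤ (𝒦.erase C).card * m :=
    Finset.card_biUnion_le_card_mul _ _ _ fun D hD =>
      hout D (Finset.mem_of_mem_erase hD) p (hp D hD hpC)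
  have b3 := Finset.card_union_le C ((𝒦.erase C).biUnion fun D => D.filter fun c => G.Adj p c)
  omega

/-! ### Private neighbours in an anti-clique -/

/-- The vertex `x` together with its neighbours that are adjacent to no other vertex of `I`. -/
def privateNbrs (G : SimpleGraph V) [DecidableRel G.Adj] (I : Finset V) (x : V) : Finset V :=
  (insert x (G.neighborFinset x)).filter fun p => ∀ y ∈ I, y ≠ x → ¬ G.Adj y p

lemma le_card_privateNbrs {w e : ℕ} (h1 : G.IsRegularOfDegree w)
    (h2 : ∀ x y : V, x ≠ y → ¬ G.Adj x y →
      (G.neighborFinset x ∩ G.neighborFinset y).card ≤ e) {I : Finset V} (hI : IsAntiClique G I)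
    {x : V} (hx : x ∈ I) : w + 1 ≤ (privateNbrs G I x).card + (I.card - 1) * e := by
  have hsub : insert x (G.neighborFinset x) ⊆ privateNbrs G I x ∪
      (I.erase x).biUnion fun y => G.neighborFinset x ∩ G.neighborFinset y := by
    intro p hp
    by_cases h : ∀ y ∈ I, y ≠ x → ¬ G.Adj y p
    · exact Finset.mem_union_left _ (Finset.mem_filter.2 ⟨hp, h⟩)
    · push Not at h
      obtain ⟨y, hy, hyx, hyp⟩ := h
      refine Finset.mem_union_right _ (Finset.mem_biUnion.2 ⟨y, Finset.mem_erase.2 ⟨hyx, hy⟩, ?_⟩)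
      rcases Finset.mem_insert.1 hp with rfl | hp
      · exact absurd hyp (hI y hy p hx hyx)
      · exact Finset.mem_inter.2 ⟨hp, (G.mem_neighborFinset _ _).2 hyp⟩
  have hle := Finset.card_le_card hsub
  rw [Finset.card_insert_of_notMem (by simp), G.card_neighborFinset_eq_degree, h1 x] at hle
  have b1 : ((I.erase x).biUnion fun y => G.neighborFinset x ∩ G.neighborFinset y).card
      ≤ (I.erase x).card * e :=
    Finset.card_biUnion_le_card_mul _ _ _ fun y hy =>
      h2 x y (Finset.ne_of_mem_erase hy).symm
        (hI x hx y (Finset.mem_of_mem_erase hy) (Finset.ne_of_mem_erase hy).symm)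
  rw [Finset.card_erase_of_mem hx] at b1
  have b3 := Finset.card_union_le (privateNbrs G I x)
    ((I.erase x).biUnion fun y => G.neighborFinset x ∩ G.neighborFinset y)
  omega

lemma mem_privateNbrs_self {I : Finset V} (hI : IsAntiClique G I) {x : V} (hx : x ∈ I) :
    x ∈ privateNbrs G I x :=
  Finset.mem_filter.2 ⟨Finset.mem_insert_self _ _, fun y hy hyx => hI y hy x hx hyx⟩

lemma notMem_of_mem_privateNbrs {I : Finset V} (hI : IsAntiClique G I) {x p : V} (hx : x ∈ I)
    (hp : p ∈ privateNbrs G I x) : p ∉ I.erase x := by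
  intro h
  rcases Finset.mem_insert.1 (Finset.mem_filter.1 hp).1 with rfl | h'
  · simp at h
  · rw [mem_neighborFinset] at h'
    exact hI x hx p (Finset.mem_of_mem_erase h) h'.ne h'

lemma anticlique_insert_erase {I : Finset V} (hI : IsAntiClique G I) {x p : V}
    (hp : p ∈ privateNbrs G I x) : IsAntiClique G (insert p (I.erase x)) := by
  have hp := (Finset.mem_filter.1 hp).2
  intro a ha b hb hab
  simp only [Finset.mem_insert, Finset.mem_erase] at ha hb
  rcases ha with rfl | ⟨hax, ha⟩ <;> rcases hb with rfl | ⟨hbx, hb⟩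
  · exact absurd rfl hab
  · exact fun h => hp b hb hbx h.symm
  · exact hp a ha hax
  · exact hI a ha b hb hab

/-- Two non-adjacent private neighbours could replace `x`, enlarging a maximum anti-clique. -/
lemma isClique_privateNbrs {I : Finset V} (hI : IsAntiClique G I)
    (hmax : ∀ J : Finset V, IsAntiClique G J → J.card ≤ I.card) {x : V} (hx : x ∈ I) :
    G.IsClique (privateNbrs G I x : Set V) := by
  intro p hp q hq hpq
  by_contra hadj
  have hp : p ∈ privateNbrs G I x := hp
  have hq : q ∈ privateNbrs G I x := hq
  have hJ : IsAntiClique G (insert q (insert p (I.erase x))) := by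
    have h0 := anticlique_insert_erase hI hp
    have h0q := anticlique_insert_erase hI hq
    intro a ha b hb hab
    rw [Finset.mem_insert, Finset.mem_insert] at ha hb
    rcases ha with rfl | rfl | ha <;> rcases hb with rfl | rfl | hb
    · exact absurd rfl hab
    · exact fun h => hadj h.symm
    · exact h0q _ (Finset.mem_insert_self _ _) _ (Finset.mem_insert_of_mem hb) hab
    · exact hadj
    · exact absurd rfl hab
    · exact h0 _ (Finset.mem_insert_self _ _) _ (Finset.mem_insert_of_mem hb) hab
    · exact h0q _ (Finset.mem_insert_of_mem ha) _ (Finset.mem_insert_self _ _) hab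
    · exact h0 _ (Finset.mem_insert_of_mem ha) _ (Finset.mem_insert_self _ _) hab
    · exact h0 _ (Finset.mem_insert_of_mem ha) _ (Finset.mem_insert_of_mem hb) hab
  have hc := hmax _ hJ
  have hp' := notMem_of_mem_privateNbrs hI hx hp
  have hq' := notMem_of_mem_privateNbrs hI hx hq
  rw [Finset.card_insert_of_notMem (by simpa using ⟨hpq.symm, by simpa using hq'⟩),
    Finset.card_insert_of_notMem hp', Finset.card_erase_of_mem hx] at hc
  omega

end aux

/-! ### Disjointness -/

/-- Under hypotheses (H), distinct weak cliques are vertex-disjoint. -/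
theorem weakCliques_disjoint
    {V : Type*} [Fintype V] [DecidableEq V] (G : SimpleGraph V) [DecidableRel G.Adj]
    (s m n v w e : ℕ)
    (hs : 1 ≤ s) (hm : 1 ≤ m) (hn : 1 ≤ n) (hv : 1 ≤ v) (hw : 1 ≤ w) (he : 1 ≤ e)
    (hV : Fintype.card V = v)
    (h1 : G.IsRegularOfDegree w)
    (h2 : ∀ x y : V, x ≠ y → ¬ G.Adj x y →
      (G.neighborFinset x ∩ G.neighborFinset y).card ≤ e)
    (h3 : (s - 1) * e + m * s - 1 < w)
    (h4 : v < (s + 1) * (w + 1) - s * (s + 1) * e / 2)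
    (h5 : e + n ≤ m * s + 1)
    (h6 : m < e)
    (h7 : IsEmpty (tildeK (m + 1) n ↪g G))
    : ∀ C C₂ : Finset V, IsWeakClique G s w e C → IsWeakClique G s w e C₂ → C ≠ C₂ →
      Disjoint C C₂ := by
  classical
  have hms : 1 ≤ m * s := Nat.mul_pos hm hs
  have hw' : (s - 1) * e + m * s ≤ w := by omega
  let 𝒦 : Finset (Finset V) := Finset.univ.filter fun C => IsWeakClique G s w e C
  have h𝒦 : ∀ C, C ∈ 𝒦 ↔ IsWeakClique G s w e C := fun C => by simp [𝒦]
  have hbig : ∀ C ∈ 𝒦, m * s + 1 ≤ C.card := fun C hC => by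
    have := ((h𝒦 C).1 hC).2
    omega
  have hout : ∀ C ∈ 𝒦, ∀ z, z ∉ C → (C.filter fun c => G.Adj z c).card ≤ m := fun C hC z hz =>
    card_nbrs_le h2 h7 ((h𝒦 C).1 hC).1 (h5.trans (hbig C hC)) hz
  have hint : ∀ C ∈ 𝒦, ∀ D ∈ 𝒦, C ≠ D → (C ∩ D).card ≤ m := by
    intro C hC D hD hne
    have hz : ∃ z ∈ D, z ∉ C := by
      by_contra! h
      exact hne (((h𝒦 D).1 hD).1.2 C ((h𝒦 C).1 hC).1.1 h)
    obtain ⟨z, hzD, hzC⟩ := hz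
    refine le_trans (Finset.card_le_card ?_) (hout C hC z hzC)
    intro c hc
    obtain ⟨hcC, hcD⟩ := Finset.mem_inter.1 hc
    exact Finset.mem_filter.2 ⟨hcC, ((h𝒦 D).1 hD).1.1 hzD hcD fun h => hzC (h ▸ hcC)⟩
  obtain ⟨I, hI, hmax⟩ : ∃ I : Finset V, IsAntiClique G I ∧
      ∀ J : Finset V, IsAntiClique G J → J.card ≤ I.card := by
    obtain ⟨I, hI, hmax⟩ := Finset.exists_max_image
      (Finset.univ.filter fun J : Finset V => IsAntiClique G J) Finset.card
      ⟨∅, Finset.mem_filter.2 ⟨Finset.mem_univ _, fun x hx => by simp at hx⟩⟩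
    exact ⟨I, (Finset.mem_filter.1 hI).2,
      fun J hJ => hmax J (Finset.mem_filter.2 ⟨Finset.mem_univ _, hJ⟩)⟩
  have hIs : I.card ≤ s := anticlique_card_le hV h1 h2 h4 hI
  have hPcard : ∀ x ∈ I, w - (s - 1) * e + 1 ≤ (privateNbrs G I x).card := by
    intro x hx
    have b1 := le_card_privateNbrs h1 h2 hI hx
    have b2 : (I.card - 1) * e ≤ (s - 1) * e := Nat.mul_le_mul_right _ (by omega)
    omega
  have hPbig : ∀ x ∈ I, m < (privateNbrs G I x).card := by
    intro x hx
    have b1 := hPcard x hx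
    have b2 : m * 1 ≤ m * s := Nat.mul_le_mul_left _ hs
    omega
  -- Every weak clique meets every maximum anti-clique.
  have hmeet : ∀ C ∈ 𝒦, ∀ J : Finset V, IsAntiClique G J → J.card = I.card → ¬ Disjoint J C := by
    intro C hC J hJ hJc hdisj
    obtain ⟨J', hJ', hc⟩ := exists_anticlique (G := G) (s := s) (m := m) {C}
      (by simpa using hbig C hC) (by simpa using hout C hC) (by simp) J hJ (by simpa using hdisj)
      (by rw [Finset.card_singleton]; omega)
    have := hmax J' hJ'
    rw [Finset.card_singleton] at hc
    omega
  have hPsub : ∀ C ∈ 𝒦, ∀ x ∈ I, x ∈ C → privateNbrs G I x ⊆ C := by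
    intro C hC x hx hxC p hp
    by_contra hpC
    refine hmeet C hC _ (anticlique_insert_erase hI hp) ?_ ?_
    · rw [Finset.card_insert_of_notMem (notMem_of_mem_privateNbrs hI hx hp),
        Finset.card_erase_add_one hx]
    · refine Finset.disjoint_insert_left.2 ⟨hpC, Finset.disjoint_left.2 fun y hy hyC => ?_⟩
      obtain ⟨hyx, hyI⟩ := Finset.mem_erase.1 hy
      exact hI y hyI x hx hyx (((h𝒦 C).1 hC).1.1 hyC hxC hyx)
  -- Hence a weak clique is determined by its point of `I`, and each point of `I` occurs.
  have hcardK : 𝒦.card = I.card := by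
    have hx : ∀ C ∈ 𝒦, ∃ x ∈ I, x ∈ C := fun C hC => by
      simpa [Finset.disjoint_left] using hmeet C hC I hI rfl
    have hC : ∀ x ∈ I, ∃ C ∈ 𝒦, x ∈ C := fun x hx => by
      obtain ⟨C, hPC, hC⟩ := exists_isMaxClique (isClique_privateNbrs hI hmax hx)
      exact ⟨C, (h𝒦 C).2 ⟨hC, (hPcard x hx).trans (Finset.card_le_card hPC)⟩,
        hPC (mem_privateNbrs_self hI hx)⟩
    have : Nonempty V := Fintype.card_pos_iff.1 (by omega)
    choose! f hf hf' using hx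
    choose! g hg hg' using hC
    apply le_antisymm
    · refine Finset.card_le_card_of_injOn f hf fun C hC D hD hCD => ?_
      by_contra hne
      have b1 := hint C hC D hD hne
      have b2 := Finset.card_le_card (Finset.subset_inter (hPsub C hC (f C) (hf C hC) (hf' C hC))
        (hPsub D hD (f C) (hf C hC) (hCD ▸ hf' D hD)))
      have b3 := hPbig (f C) (hf C hC)
      omega
    · refine Finset.card_le_card_of_injOn g hg fun x hx y hy hxy => ?_
      by_contra hne
      have hyg : y ∈ g x := by
        have := hg' y hy
        rwa [← hxy] at this
      exact hI x hx y hy hne (((h𝒦 _).1 (hg x hx)).1.1 (hg' x hx) hyg hne)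
  have hcov : ∀ z, ∃ C ∈ 𝒦, z ∈ C := by
    intro z
    by_contra! hz
    obtain ⟨J', hJ', hc⟩ := exists_anticlique 𝒦 hbig hout hint {z}
      (by
        intro x hx y hy hxy
        rw [Finset.mem_singleton] at hx hy
        exact absurd (hx.trans hy.symm) hxy)
      (fun C hC => Finset.disjoint_singleton_left.2 (hz C hC))
      (by rw [Finset.card_singleton]; omega)
    have := hmax J' hJ'
    rw [Finset.card_singleton] at hc
    omega
  intro C D hC hD hne
  rw [Finset.disjoint_left]
  intro y hyC hyD
  have bC := degree_bound h1 hbig hout hint hcov (hcardK.trans_le hIs) ((h𝒦 C).2 hC)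
  have bD := degree_bound h1 hbig hout hint hcov (hcardK.trans_le hIs) ((h𝒦 D).2 hD)
  have bCD := hint C ((h𝒦 C).2 hC) D ((h𝒦 D).2 hD) hne
  have hun := Finset.card_union_add_card_inter C D
  have hsub : C ∪ D ⊆ insert y (G.neighborFinset y) := by
    intro c hc
    by_cases hyc : y = c
    · exact hyc ▸ Finset.mem_insert_self _ _
    · refine Finset.mem_insert_of_mem ((G.mem_neighborFinset _ _).2 ?_)
      rcases Finset.mem_union.1 hc with hc | hc
      · exact hC.1.1 hyC hc hyc
      · exact hD.1.1 hyD hc hyc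
  have hle := Finset.card_le_card hsub
  rw [Finset.card_insert_of_notMem (by simp), G.card_neighborFinset_eq_degree, h1 y] at hle
  have b1 : (s - 1) * m ≤ (s - 1) * e := Nat.mul_le_mul_left _ h6.le
  have b2 : m * s = (s - 1) * m + m := by
    obtain ⟨k, rfl⟩ := Nat.exists_eq_add_of_le' hs
    simp
    ring
  omega
end
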